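/- Let σ_Z > 0, b ∈ ℝ, 0 < δ ≤ 1/10, and let (N₁, N₂, N₃) be a centered jointly Gaussian vector with Var(N_i) = σ_Z²(1 + ε_i) and Cov(N_i, N_j) = σ_Z² ρ_{ij} for i ≠ j, where all |ε_i| ≤ δ and all |ρ_{ij}| ≤ δ. Let f : ℝ → ℝ be measurable with E|f(σ N + b)|^k < ∞ for 1 ≤ k ≤ 4 and all σ > 0 (N ~ N(0,1)), and suppose E[f(σ_Z N + b)] = 0. Set t_{ij} := E[f(N_i + b) f(N_j + b)]. Then there is a constant C (depending only on f, b, σ_Z) such that |E[( f(N₁+b)² − t_{11} )( f(N₂+b) f(N₃+b) − t_{23} )]| ≤ C δ². -/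

import Mathlib

/-!
After rescaling, put `F y = f (σ_Z y + b)` and `B = σ_Z⁻¹ A`, so that `B Bᵀ` is within `δ` of the
identity and `F` is centered under the standard Gaussian. The law of `B x` has density
`|det B|⁻¹ exp (-(y ⬝ᵥ M *ᵥ y) / 2)`, `M = (B Bᵀ)⁻¹ - 1 = O(δ)`, with respect to the standard Gaussian
measure (`map_stdGaussPi`, `inv_sub_one_bound`). Write `J(h₁, h₂, h₃)` for the integral of
`h₁ ⊗ h₂ ⊗ h₃` against this exponential. The covariance equals
`(J(F², F, F) J(1, 1, 1) - J(F², 1, 1) J(1, F, F)) / |det B|²`, because `J(1, 1, 1) = |det B|`.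

Expanding the exponential (`tilt_expansion`) is legitimate because `F` and `F²` are integrable under
Gaussians of every variance. As `E F = 0`, the only surviving first-order term of `J(h, F, F)` comes
from the monomial `x₂ x₃` (`integral_linear_term`). With `a = E F²` and `k = E[x F]`, up to `O(δ²)` one
has `J(F², F, F) ≈ -M₂₃ a k²` and `J(1, F, F) ≈ -M₂₃ k²`, while `J(1, 1, 1) = 1 + O(δ)` and
`J(F², 1, 1) = a + O(δ)`. The terms of order `δ` cancel (`quotient_bound`), and `|det B|² ≥ 1 / 2`.
-/

open Matrix MeasureTheory ProbabilityTheory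

/-- Standard Gaussian product measure on `Fin k → ℝ`. -/
noncomputable def stdGaussPi (k : ℕ) : Measure (Fin k → ℝ) :=
  Measure.pi fun _ => gaussianReal 0 1

/-! ### Law of a linear image of a standard Gaussian vector -/

lemma stdGaussPi_eq_withDensity (k : ℕ) : stdGaussPi k =
    volume.withDensity fun x => ENNReal.ofReal (∏ i, gaussianPDFReal 0 1 (x i)) := by
  refine Measure.pi_eq fun s hs => ?_
  rw [withDensity_apply _ (MeasurableSet.univ_pi hs), volume_pi, Measure.restrict_pi_pi,
    ← ofReal_integral_eq_lintegral_ofReal, integral_fintype_prod_eq_prod,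
    ENNReal.ofReal_prod_of_nonneg]
  · refine Finset.prod_congr rfl fun i _ => ?_
    rw [gaussianReal_apply_eq_integral _ one_ne_zero]
  · intro i _
    exact integral_nonneg fun x => gaussianPDFReal_nonneg _ _ _
  · exact Integrable.fintype_prod fun i => (integrable_gaussianPDFReal 0 1).restrict
  · exact Filter.Eventually.of_forall fun x =>
      Finset.prod_nonneg fun i _ => gaussianPDFReal_nonneg _ _ _

/-- Ratio of the standard Gaussian densities at two points. -/
lemma prod_gaussianPDFReal (x y : Fin 3 → ℝ) : ∏ i, gaussianPDFReal 0 1 (y i) =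
    (∏ i, gaussianPDFReal 0 1 (x i)) * Real.exp (-(y ⬝ᵥ y - x ⬝ᵥ x) / 2) := by
  simp only [Fin.prod_univ_three, gaussianPDFReal, dotProduct, Fin.sum_univ_three]
  have h : ∀ c a b d e f g k: ℝ, a * b * d = e * f * g * k →
      (c * a) * (c * b) * (c * d) = (c * e) * (c * f) * (c * g) * k := by
    intro c a b d e f g k h; linear_combination c ^ 3 * h
  apply h
  simp only [← Real.exp_add]
  congr 1
  push_cast
  ring

/-- The law of `A x` has density `|det A|⁻¹ exp (-(|A⁻¹ y|² - |y|²) / 2)` with respect to the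
standard Gaussian measure itself, which turns every expectation into a tilted one under a fixed
product measure. -/
lemma map_stdGaussPi (A : Matrix (Fin 3) (Fin 3) ℝ) (hA : A.det ≠ 0) :
    (stdGaussPi 3).map A.mulVec = ENNReal.ofReal |A.det⁻¹| • (stdGaussPi 3).withDensity
      fun y => ENNReal.ofReal (Real.exp (-(A⁻¹ *ᵥ y ⬝ᵥ A⁻¹ *ᵥ y - y ⬝ᵥ y) / 2)) := by
  have hmA : ∀ B : Matrix (Fin 3) (Fin 3) ℝ, Measurable B.mulVec := fun B =>
    (Continuous.matrix_mulVec continuous_const continuous_id).measurable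
  have hpm : Measurable fun x : Fin 3 → ℝ =>
      ENNReal.ofReal (∏ i, gaussianPDFReal 0 1 (x i)) := by
    refine ENNReal.measurable_ofReal.comp (Finset.measurable_fun_prod _ fun i _ => ?_)
    exact (measurable_gaussianPDFReal 0 1).comp (measurable_pi_apply i)
  have hem : Measurable fun y : Fin 3 → ℝ =>
      ENNReal.ofReal (Real.exp (-(A⁻¹ *ᵥ y ⬝ᵥ A⁻¹ *ᵥ y - y ⬝ᵥ y) / 2)) := by
    refine ENNReal.measurable_ofReal.comp (Continuous.measurable ?_)
    fun_prop
  refine Measure.ext_of_lintegral _ fun h hh => ?_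
  rw [lintegral_map hh (hmA A), lintegral_smul_measure,
    lintegral_withDensity_eq_lintegral_mul _ hem hh, stdGaussPi_eq_withDensity,
    lintegral_withDensity_eq_lintegral_mul _ hpm (g := fun a => h (A *ᵥ a)) (hh.comp (hmA A)),
    lintegral_withDensity_eq_lintegral_mul _ hpm (hem.mul hh), ← lintegral_smul_measure,
    ← Real.map_matrix_volume_pi_eq_smul_volume_pi hA]
  rw [lintegral_map (hpm.mul (hem.mul hh)) (by exact hmA A)]
  refine lintegral_congr fun x => ?_
  have hinv : A⁻¹ *ᵥ (A *ᵥ x) = x := by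
    rw [mulVec_mulVec, nonsing_inv_mul _ (isUnit_iff_ne_zero.2 hA), one_mulVec]
  simp only [Pi.mul_apply, toLin'_apply, hinv]
  rw [← mul_assoc, ← ENNReal.ofReal_mul, ← prod_gaussianPDFReal]
  exact Finset.prod_nonneg fun i _ => gaussianPDFReal_nonneg _ _ _

/-- Expectations of functions of `A x` as tilted standard Gaussian expectations. -/
lemma stdGaussPi_integral_mulVec (A : Matrix (Fin 3) (Fin 3) ℝ) (hA : A.det ≠ 0)
    (h : (Fin 3 → ℝ) → ℝ) (hh : Measurable h)
    (hi : Integrable (fun y => h y * Real.exp (-(A⁻¹ *ᵥ y ⬝ᵥ A⁻¹ *ᵥ y - y ⬝ᵥ y) / 2))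
      (stdGaussPi 3)) :
    Integrable (fun x => h (A *ᵥ x)) (stdGaussPi 3) ∧
    ∫ x, h (A *ᵥ x) ∂(stdGaussPi 3) = |A.det|⁻¹ *
      ∫ y, h y * Real.exp (-(A⁻¹ *ᵥ y ⬝ᵥ A⁻¹ *ᵥ y - y ⬝ᵥ y) / 2) ∂(stdGaussPi 3) := by
  have hmA : Measurable A.mulVec :=
    (Continuous.matrix_mulVec continuous_const continuous_id).measurable
  have hem : Measurable fun y : Fin 3 → ℝ =>
      ENNReal.ofReal (Real.exp (-(A⁻¹ *ᵥ y ⬝ᵥ A⁻¹ *ᵥ y - y ⬝ᵥ y) / 2)) := by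
    refine ENNReal.measurable_ofReal.comp (Continuous.measurable ?_)
    fun_prop
  constructor
  · refine (integrable_map_measure hh.aestronglyMeasurable hmA.aemeasurable).1 ?_
    rw [map_stdGaussPi A hA]
    refine Integrable.smul_measure ?_ ENNReal.ofReal_ne_top
    rw [integrable_withDensity_iff_integrable_smul' hem (by simp)]
    simpa [Real.exp_nonneg, mul_comm] using hi
  · rw [← integral_map (f := h) hmA.aemeasurable hh.aestronglyMeasurable,
      map_stdGaussPi A hA, integral_smul_measure,
      integral_withDensity_eq_integral_toReal_smul hem (by simp)]
    simp [Real.exp_nonneg, mul_comm, abs_inv]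

/-! ### Expansion of tilted Gaussian integrals -/

/-- Envelope absorbing the tilts `exp (-(x ⬝ᵥ M *ᵥ x) / 2)` for `M` of size `3 / 10`. The exponent
`99 / 200 < 1 / 2` is chosen so that `gaussEnv` times the standard Gaussian density is a multiple of
the Gaussian density of standard deviation `10`. -/
noncomputable def gaussEnv (x : ℝ) : ℝ := Real.exp (99 / 200 * x ^ 2)

lemma prod_gaussEnv (x : Fin 3 → ℝ) : ∏ i, gaussEnv (x i) = Real.exp (99 / 200 * (x ⬝ᵥ x)) := by
  simp only [Fin.prod_univ_three, gaussEnv, dotProduct, Fin.sum_univ_three, ← Real.exp_add]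
  congr 1; ring

lemma measurable_gaussEnv : Measurable gaussEnv := by
  unfold gaussEnv; fun_prop

lemma abs_quadForm_le (M : Matrix (Fin 3) (Fin 3) ℝ) (c : ℝ) (hM : ∀ i j, |M i j| ≤ c)
    (x : Fin 3 → ℝ) : |x ⬝ᵥ M *ᵥ x| ≤ 3 * c * (x ⬝ᵥ x) := by
  have hc : 0 ≤ c := (abs_nonneg _).trans (hM 0 0)
  have key : ∀ i j, |x i * (M i j * x j)| ≤ c * (|x i| * |x j|) := by
    intro i j
    rw [abs_mul, abs_mul]
    nlinarith [mul_le_mul_of_nonneg_right (hM i j)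
      (mul_nonneg (abs_nonneg (x i)) (abs_nonneg (x j)))]
  calc |x ⬝ᵥ M *ᵥ x| = |∑ i, ∑ j, x i * (M i j * x j)| := by
        simp only [dotProduct, mulVec, Finset.mul_sum]
    _ ≤ ∑ i, ∑ j, c * (|x i| * |x j|) :=
        (Finset.abs_sum_le_sum_abs _ _).trans (Finset.sum_le_sum fun i _ =>
          (Finset.abs_sum_le_sum_abs _ _).trans (Finset.sum_le_sum fun j _ => key i j))
    _ ≤ 3 * c * (x ⬝ᵥ x) := by
        simp only [Fin.sum_univ_three, dotProduct]
        have h := mul_nonneg hc (add_nonneg (add_nonneg (sq_nonneg (|x 0| - |x 1|))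
          (sq_nonneg (|x 0| - |x 2|))) (sq_nonneg (|x 1| - |x 2|)))
        nlinarith [abs_mul_abs_self (x 0), abs_mul_abs_self (x 1), abs_mul_abs_self (x 2)]

lemma abs_exp_sub_one_le_mul_exp (v : ℝ) : |Real.exp v - 1| ≤ |v| * Real.exp |v| := by
  have h := Complex.norm_exp_sub_sum_le_norm_mul_exp (v : ℂ) 1
  simp only [Finset.sum_range_one, pow_zero, Nat.factorial_zero, Nat.cast_one, div_one,
    pow_one, Complex.norm_real, Real.norm_eq_abs] at h
  rw [← Complex.ofReal_exp] at h
  exact_mod_cast h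

lemma abs_exp_sub_one_sub_le_mul_exp (v : ℝ) :
    |Real.exp v - 1 - v| ≤ |v| ^ 2 * Real.exp |v| := by
  have h := Complex.norm_exp_sub_sum_le_norm_mul_exp (v : ℂ) 2
  simp only [Finset.sum_range_succ, Finset.sum_range_zero, zero_add, pow_zero, Nat.factorial_zero,
    Nat.factorial_one, Nat.cast_one, div_one, pow_one, Complex.norm_real,
    Real.norm_eq_abs, ← sub_sub] at h
  rw [← Complex.ofReal_exp] at h
  exact_mod_cast h

/-- Taylor bounds for `exp v` when `|v| ≤ 9 / 2 * δ * s`: then `exp |v| ≤ exp (9 / 20 * s)`, and the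
slack `9 / 200 * s` in the exponent `99 / 200 * s` absorbs the polynomial factors `s` and `s ^ 2`. -/
lemma exp_bounds {δ s v : ℝ} (hδ : 0 < δ) (hδ' : δ ≤ 1 / 10) (hs : 0 ≤ s)
    (hv : |v| ≤ 9 / 2 * δ * s) :
    Real.exp v ≤ Real.exp (99 / 200 * s) ∧ |v| ≤ 1000 * δ * Real.exp (99 / 200 * s) ∧
    |Real.exp v - 1| ≤ 1000 * δ * Real.exp (99 / 200 * s) ∧
    |Real.exp v - 1 - v| ≤ 100000 * δ ^ 2 * Real.exp (99 / 200 * s) := by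
  have hv45 : |v| ≤ 9 / 20 * s := by nlinarith
  have hE : Real.exp |v| ≤ Real.exp (9 / 20 * s) := Real.exp_le_exp.2 hv45
  have hsplit : Real.exp (99 / 200 * s) = Real.exp (9 / 20 * s) * Real.exp (9 / 200 * s) := by
    rw [← Real.exp_add]; congr 1; ring
  have hsplit' : Real.exp (9 / 200 * s) = Real.exp (9 / 400 * s) ^ 2 := by
    rw [← Real.exp_nat_mul]; congr 1; push_cast; ring
  have h1 : s ≤ 50 * Real.exp (9 / 400 * s) := by
    nlinarith [Real.add_one_le_exp (9 / 400 * s), Real.exp_pos (9 / 400 * s)]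
  have h2 : s ^ 2 ≤ 2500 * Real.exp (9 / 200 * s) := by
    rw [hsplit']
    nlinarith [Real.exp_pos (9 / 400 * s)]
  have h3 : s ≤ 50 * Real.exp (9 / 200 * s) :=
    h1.trans (by gcongr; linarith)
  have hv1 : |v| ≤ 1000 * δ * Real.exp (9 / 200 * s) := by
    nlinarith [mul_le_mul_of_nonneg_left h3 hδ.le, mul_pos hδ (Real.exp_pos (9 / 200 * s))]
  have hv2 : |v| ^ 2 ≤ 100000 * δ ^ 2 * Real.exp (9 / 200 * s) := by
    calc |v| ^ 2 ≤ (9 / 2 * δ * s) ^ 2 := by gcongr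
      _ = 81 / 4 * δ ^ 2 * s ^ 2 := by ring
      _ ≤ 81 / 4 * δ ^ 2 * (2500 * Real.exp (9 / 200 * s)) := by gcongr
      _ ≤ _ := by nlinarith [mul_pos (pow_pos hδ 2) (Real.exp_pos (9 / 200 * s))]
  refine ⟨Real.exp_le_exp.2 ((le_abs_self v).trans (hv45.trans (by linarith))), ?_, ?_, ?_⟩
  · refine hv1.trans ?_
    gcongr; linarith
  · refine (abs_exp_sub_one_le_mul_exp v).trans ?_
    calc |v| * Real.exp |v| ≤ (1000 * δ * Real.exp (9 / 200 * s)) * Real.exp (9 / 20 * s) := by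
          gcongr
      _ = _ := by rw [hsplit]; ring
  · refine (abs_exp_sub_one_sub_le_mul_exp v).trans ?_
    calc |v| ^ 2 * Real.exp |v|
        ≤ (100000 * δ ^ 2 * Real.exp (9 / 200 * s)) * Real.exp (9 / 20 * s) := by
          gcongr
      _ = _ := by rw [hsplit]; ring

lemma integrable_mul_pow {h : ℝ → ℝ} (hm : Measurable h)
    (hi : Integrable (fun x => h x * gaussEnv x) (gaussianReal 0 1)) {p : ℕ} (hp : p ≤ 2) :
    Integrable (fun x => h x * x ^ p) (gaussianReal 0 1) := by
  refine Integrable.mono' (hi.norm.const_mul 3) (by fun_prop) (Filter.Eventually.of_forall ?_)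
  intro x
  have hG : 1 + x ^ 2 ≤ 3 * gaussEnv x := by
    unfold gaussEnv
    nlinarith [Real.add_one_le_exp (99 / 200 * x ^ 2), sq_nonneg x]
  have hx : |x ^ p| ≤ 3 * gaussEnv x := by
    refine le_trans ?_ hG
    interval_cases p
    · simp [sq_nonneg]
    · rw [pow_one, ← sq_abs]
      nlinarith [sq_nonneg (|x| - 1), abs_nonneg x]
    · rw [abs_of_nonneg (sq_nonneg x)]; linarith
  have hGp : 0 < gaussEnv x := Real.exp_pos _
  simp only [norm_mul, Real.norm_eq_abs, abs_of_pos hGp]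
  nlinarith [mul_le_mul_of_nonneg_left hx (abs_nonneg (h x))]

/-- Expansion of a tilted product expectation around `M = 0`, to zeroth order with error `O(δ)` and
to first order with error `O(δ²)`; the constants depend on the `h i` only. -/
lemma tilt_expansion (h : Fin 3 → ℝ → ℝ) (hm : ∀ i, Measurable (h i))
    (hi : ∀ i, Integrable (fun x => h i x * gaussEnv x) (gaussianReal 0 1))
    {δ : ℝ} (hδ : 0 < δ) (hδ' : δ ≤ 1 / 10) (M : Matrix (Fin 3) (Fin 3) ℝ)
    (hM : ∀ i j, |M i j| ≤ 3 * δ) :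
    Integrable (fun x => (∏ i, h i (x i)) * Real.exp (-(x ⬝ᵥ M *ᵥ x) / 2)) (stdGaussPi 3) ∧
    |(∫ x, (∏ i, h i (x i)) * Real.exp (-(x ⬝ᵥ M *ᵥ x) / 2) ∂(stdGaussPi 3)) -
      ∏ i, ∫ x, h i x ∂(gaussianReal 0 1)| ≤
      1000 * (∏ i, ∫ x, |h i x * gaussEnv x| ∂(gaussianReal 0 1)) * δ ∧
    |(∫ x, (∏ i, h i (x i)) * Real.exp (-(x ⬝ᵥ M *ᵥ x) / 2) ∂(stdGaussPi 3)) -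
      (∏ i, ∫ x, h i x ∂(gaussianReal 0 1)) -
      ∫ x, (∏ i, h i (x i)) * (-(x ⬝ᵥ M *ᵥ x) / 2) ∂(stdGaussPi 3)| ≤
      100000 * (∏ i, ∫ x, |h i x * gaussEnv x| ∂(gaussianReal 0 1)) * δ ^ 2 := by
  set H : (Fin 3 → ℝ) → ℝ := fun x => ∏ i, h i (x i) with hH
  set w : (Fin 3 → ℝ) → ℝ := fun x => -(x ⬝ᵥ M *ᵥ x) / 2 with hw
  set E : (Fin 3 → ℝ) → ℝ := fun x => ∏ i, |h i (x i) * gaussEnv (x i)| with hE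
  have hEi : Integrable E (stdGaussPi 3) :=
    Integrable.fintype_prod (f := fun i x => |h i x * gaussEnv x|) fun i => (hi i).norm
  have hEint : ∫ x, E x ∂(stdGaussPi 3) =
      ∏ i, ∫ x, |h i x * gaussEnv x| ∂(gaussianReal 0 1) :=
    integral_fintype_prod_eq_prod fun i x => |h i x * gaussEnv x|
  have hHint : ∫ x, H x ∂(stdGaussPi 3) = ∏ i, ∫ x, h i x ∂(gaussianReal 0 1) :=
    integral_fintype_prod_eq_prod h
  have hHi : Integrable H (stdGaussPi 3) :=
    Integrable.fintype_prod fun i => by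
      simpa using integrable_mul_pow (hm i) (hi i) (Nat.zero_le 2)
  have hEeq : ∀ x, E x = |H x| * Real.exp (99 / 200 * (x ⬝ᵥ x)) := by
    intro x
    rw [← prod_gaussEnv, hE, hH]
    simp only [Finset.abs_prod, ← Finset.prod_mul_distrib, abs_mul]
    refine Finset.prod_congr rfl fun i _ => ?_
    rw [abs_of_pos (show 0 < gaussEnv (x i) from Real.exp_pos _)]
  have hwc : Continuous w := by rw [hw]; fun_prop
  have hHm : Measurable H := Finset.measurable_fun_prod _ fun i _ =>
    (hm i).comp (measurable_pi_apply i)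
  have hwb : ∀ x, |w x| ≤ 9 / 2 * δ * (x ⬝ᵥ x) := by
    intro x
    have := abs_quadForm_le M _ hM x
    simp only [hw, abs_div, abs_neg, abs_two]
    linarith
  have hss : ∀ x : Fin 3 → ℝ, 0 ≤ x ⬝ᵥ x := fun x =>
    Finset.sum_nonneg fun i _ => mul_self_nonneg _
  have hb := fun x => exp_bounds hδ hδ' (hss x) (hwb x)
  have hi1 : Integrable (fun x => H x * Real.exp (w x)) (stdGaussPi 3) := by
    refine Integrable.mono' hEi (by fun_prop) (Filter.Eventually.of_forall fun x => ?_)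
    rw [hEeq, norm_mul, Real.norm_eq_abs, Real.norm_eq_abs, Real.abs_exp]
    exact mul_le_mul_of_nonneg_left (hb x).1 (abs_nonneg _)
  have hi2 : Integrable (fun x => H x * w x) (stdGaussPi 3) := by
    refine Integrable.mono' (hEi.const_mul (1000 * δ)) (by fun_prop)
      (Filter.Eventually.of_forall fun x => ?_)
    rw [hEeq, norm_mul, Real.norm_eq_abs, Real.norm_eq_abs]
    calc |H x| * |w x| ≤ |H x| * _ := mul_le_mul_of_nonneg_left (hb x).2.1 (abs_nonneg _)
      _ = _ := by ring
  refine ⟨hi1, ?_, ?_⟩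
  · rw [← hHint, ← hEint, ← integral_sub hi1 hHi]
    calc _ ≤ ∫ x, |H x * Real.exp (w x) - H x| ∂(stdGaussPi 3) := abs_integral_le_integral_abs
      _ ≤ ∫ x, (1000 * δ) * E x ∂(stdGaussPi 3) := by
          refine integral_mono (hi1.sub hHi).norm (hEi.const_mul _) fun x => ?_
          simp only [hEeq]
          rw [show H x * Real.exp (w x) - H x = H x * (Real.exp (w x) - 1) by ring, abs_mul]
          calc |H x| * _ ≤ |H x| * _ :=
                mul_le_mul_of_nonneg_left (hb x).2.2.1 (abs_nonneg _)
            _ = _ := by ring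
      _ = _ := by rw [integral_const_mul]; ring
  · rw [← hHint, ← hEint, ← integral_sub hi1 hHi,
      ← integral_sub (f := fun x => H x * Real.exp (w x) - H x) (hi1.sub hHi) hi2]
    calc _ ≤ ∫ x, |H x * Real.exp (w x) - H x - H x * w x| ∂(stdGaussPi 3) :=
          abs_integral_le_integral_abs
      _ ≤ ∫ x, (100000 * δ ^ 2) * E x ∂(stdGaussPi 3) := by
          refine integral_mono ((hi1.sub hHi).sub hi2).norm (hEi.const_mul _) fun x => ?_
          simp only [hEeq]
          rw [show H x * Real.exp (w x) - H x - H x * w x =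
            H x * (Real.exp (w x) - 1 - w x) by ring, abs_mul]
          calc |H x| * _ ≤ |H x| * _ :=
                mul_le_mul_of_nonneg_left (hb x).2.2.2 (abs_nonneg _)
            _ = _ := by ring
      _ = _ := by rw [integral_const_mul]; ring

/-- First-order term for the product `h ⊗ F ⊗ F` with `F` centered: each monomial `x i * x j` with
`{i, j} ≠ {1, 2}` leaves a factor `F` integrated alone, hence contributes zero. -/
lemma integral_linear_term (h F : ℝ → ℝ) (hm : Measurable h) (hFm : Measurable F)
    (hi : Integrable (fun x => h x * gaussEnv x) (gaussianReal 0 1))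
    (hFi : Integrable (fun x => F x * gaussEnv x) (gaussianReal 0 1))
    (hF0 : ∫ x, F x ∂(gaussianReal 0 1) = 0)
    (M : Matrix (Fin 3) (Fin 3) ℝ) (hsym : M 2 1 = M 1 2) :
    ∫ x, (∏ i, ![h, F, F] i (x i)) * (-(x ⬝ᵥ M *ᵥ x) / 2) ∂(stdGaussPi 3) =
      -(M 1 2 * (∫ x, h x ∂(gaussianReal 0 1)) *
        (∫ x, F x * x ∂(gaussianReal 0 1)) ^ 2) := by
  set g : Fin 3 → ℝ → ℝ := ![h, F, F] with hg
  have hgm : ∀ l, Measurable (g l) := by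
    intro l; fin_cases l <;> assumption
  have hgi : ∀ l, Integrable (fun x => g l x * gaussEnv x) (gaussianReal 0 1) := by
    intro l; fin_cases l <;> assumption
  -- `p i j l` is the exponent of `x l` in the monomial `x i * x j`.
  let p : Fin 3 → Fin 3 → Fin 3 → ℕ := fun i j l =>
    (if l = i then 1 else 0) + (if l = j then 1 else 0)
  have hp : ∀ i j l, p i j l ≤ 2 := by
    intro i j l; dsimp only [p]; split_ifs <;> norm_num
  have hexp : ∀ x : Fin 3 → ℝ, (∏ i, g i (x i)) * (-(x ⬝ᵥ M *ᵥ x) / 2) =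
      ∑ i, ∑ j, (-(M i j) / 2) * ∏ l, (g l (x l) * (x l) ^ (p i j l)) := by
    intro x
    simp [Fin.sum_univ_three, Fin.prod_univ_three, dotProduct, mulVec, p]
    ring
  have hint : ∀ i j, Integrable (fun x : Fin 3 → ℝ => (-(M i j) / 2) *
      ∏ l, (g l (x l) * (x l) ^ (p i j l))) (stdGaussPi 3) := fun i j =>
    (Integrable.fintype_prod (f := fun l x => g l x * x ^ (p i j l)) fun l =>
      integrable_mul_pow (hgm l) (hgi l) (hp i j l)).const_mul _
  have hval : ∀ i j, ∫ x : Fin 3 → ℝ, (-(M i j) / 2) *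
      ∏ l, (g l (x l) * (x l) ^ (p i j l)) ∂(stdGaussPi 3) =
      (-(M i j) / 2) * ∏ l, ∫ x, g l x * x ^ (p i j l) ∂(gaussianReal 0 1) := by
    intro i j
    rw [integral_const_mul]
    congr 1
    exact integral_fintype_prod_eq_prod fun l x => g l x * x ^ (p i j l)
  simp_rw [hexp]
  rw [integral_finsetSum _ fun i _ => integrable_finsetSum _ fun j _ => hint i j]
  simp_rw [integral_finsetSum _ fun j _ => hint _ j, hval]
  simp [Fin.sum_univ_three, Fin.prod_univ_three, p, hg, hF0, hsym]
  ring

/-! ### Integrability from the moment assumption -/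

lemma integrable_gaussianReal_iff (g : ℝ → ℝ) : Integrable g (gaussianReal 0 1) ↔
    Integrable (fun x => g x * Real.exp (-x ^ 2 / 2)) := by
  rw [gaussianReal_of_var_ne_zero _ one_ne_zero,
    integrable_withDensity_iff_integrable_smul' (measurable_gaussianPDF 0 1)
      (Filter.Eventually.of_forall fun x => gaussianPDF_lt_top)]
  have hc : IsUnit (√(2 * Real.pi))⁻¹ := by
    rw [isUnit_iff_ne_zero]; positivity
  rw [← integrable_const_mul_iff hc (fun x => g x * Real.exp (-x ^ 2 / 2))]
  refine integrable_congr (Filter.Eventually.of_forall fun x => ?_)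
  simp [toReal_gaussianPDF, gaussianPDFReal]
  ring

/-- Integrability against the envelope is integrability under a Gaussian of standard deviation `10`. -/
lemma integrable_mul_gaussEnv {h : ℝ → ℝ}
    (hi : Integrable (fun x => h (10 * x)) (gaussianReal 0 1)) :
    Integrable (fun x => h x * gaussEnv x) (gaussianReal 0 1) := by
  rw [integrable_gaussianReal_iff] at hi ⊢
  refine (integrable_comp_mul_left_iff _ (show (10 : ℝ) ≠ 0 by norm_num)).1 ?_
  refine hi.congr (Filter.Eventually.of_forall fun x => ?_)
  simp only [gaussEnv, mul_assoc, ← Real.exp_add]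
  congr 2
  ring

/-! ### The inverse covariance matrix -/

set_option maxHeartbeats 1000000 in
/-- A symmetric matrix within `δ ≤ 1 / 10` of the identity has determinant at least `1 / 2` and
inverse within `3 * δ` of the identity, entrywise. -/
lemma inv_sub_one_bound {S : Matrix (Fin 3) (Fin 3) ℝ} {δ : ℝ} (hδ : 0 < δ) (hδ' : δ ≤ 1 / 10)
    (hsym : ∀ i j, S i j = S j i) (hd : ∀ i, |S i i - 1| ≤ δ)
    (ho : ∀ i j, i ≠ j → |S i j| ≤ δ) :
    1 / 2 ≤ S.det ∧ ∀ i j, |(S⁻¹ - 1) i j| ≤ 3 * δ := by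
  have p2 : ∀ x y : ℝ, |x| ≤ δ → |y| ≤ δ → |x * y| ≤ δ / 10 := by
    intro x y hx hy
    rw [abs_mul]
    nlinarith [abs_nonneg x, abs_nonneg y]
  have p3 : ∀ x y z : ℝ, |x| ≤ δ → |y| ≤ δ → |z| ≤ δ → |x * y * z| ≤ δ / 100 := by
    intro x y z hx hy hz
    have := p2 x y hx hy
    rw [abs_mul]
    nlinarith [abs_nonneg (x * y), abs_nonneg z]
  obtain ⟨e0, he0⟩ : ∃ e, e = S 0 0 - 1 := ⟨_, rfl⟩
  obtain ⟨e1, he1⟩ : ∃ e, e = S 1 1 - 1 := ⟨_, rfl⟩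
  obtain ⟨e2, he2⟩ : ∃ e, e = S 2 2 - 1 := ⟨_, rfl⟩
  obtain ⟨a, ha⟩ : ∃ e, e = S 0 1 := ⟨_, rfl⟩
  obtain ⟨b, hb⟩ : ∃ e, e = S 0 2 := ⟨_, rfl⟩
  obtain ⟨c, hc⟩ : ∃ e, e = S 1 2 := ⟨_, rfl⟩
  have h0 : |e0| ≤ δ := he0 ▸ hd 0
  have h1 : |e1| ≤ δ := he1 ▸ hd 1
  have h2 : |e2| ≤ δ := he2 ▸ hd 2
  have hA : |a| ≤ δ := ha ▸ ho 0 1 (by decide)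
  have hB : |b| ≤ δ := hb ▸ ho 0 2 (by decide)
  have hC : |c| ≤ δ := hc ▸ ho 1 2 (by decide)
  have s00 : S 0 0 = 1 + e0 := by linarith
  have s11 : S 1 1 = 1 + e1 := by linarith
  have s22 : S 2 2 = 1 + e2 := by linarith
  have s10 : S 1 0 = a := by rw [hsym, ha]
  have s20 : S 2 0 = b := by rw [hsym, hb]
  have s21 : S 2 1 = c := by rw [hsym, hc]
  have hdet : S.det = 1 + e0 + e1 + e2 + e0 * e1 + e0 * e2 + e1 * e2 + e0 * e1 * e2
      + 2 * (a * b * c) - c * c - b * b - a * a - e0 * c * c - e1 * b * b - e2 * a * a := by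
    rw [det_fin_three, s00, s11, s22, s10, s20, s21, ← ha, ← hb, ← hc]; ring
  have q01 := abs_le.1 (p2 _ _ h0 h1)
  have q02 := abs_le.1 (p2 _ _ h0 h2)
  have q12 := abs_le.1 (p2 _ _ h1 h2)
  have qaa := abs_le.1 (p2 _ _ hA hA)
  have qbb := abs_le.1 (p2 _ _ hB hB)
  have qcc := abs_le.1 (p2 _ _ hC hC)
  have qab := abs_le.1 (p2 _ _ hA hB)
  have qac := abs_le.1 (p2 _ _ hA hC)
  have qbc := abs_le.1 (p2 _ _ hB hC)
  have qa2 := abs_le.1 (p2 _ _ hA h2)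
  have qb1 := abs_le.1 (p2 _ _ hB h1)
  have qc0 := abs_le.1 (p2 _ _ hC h0)
  have t012 := abs_le.1 (p3 _ _ _ h0 h1 h2)
  have tabc := abs_le.1 (p3 _ _ _ hA hB hC)
  have t0 := abs_le.1 (p3 _ _ _ h0 hC hC)
  have t1 := abs_le.1 (p3 _ _ _ h1 hB hB)
  have t2 := abs_le.1 (p3 _ _ _ h2 hA hA)
  have g0 := abs_le.1 h0
  have g1 := abs_le.1 h1
  have g2 := abs_le.1 h2
  have gA := abs_le.1 hA
  have gB := abs_le.1 hB
  have gC := abs_le.1 hC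
  have hdet2 : 1 / 2 ≤ S.det := by rw [hdet]; linarith
  refine ⟨hdet2, ?_⟩
  have hpos : 0 < S.det := by linarith
  -- `S⁻¹ - 1 = (adj S - det S) / det S`, and `det S ≥ 1/2`.
  have key : ∀ i j, |S.adjugate i j - S.det * (1 : Matrix (Fin 3) (Fin 3) ℝ) i j| ≤ 3 / 2 * δ →
      |(S⁻¹ - 1) i j| ≤ 3 * δ := by
    intro i j h
    have : (S⁻¹ - 1) i j =
        (S.adjugate i j - S.det * (1 : Matrix (Fin 3) (Fin 3) ℝ) i j) / S.det := by
      rw [Matrix.inv_def, Ring.inverse_eq_inv', Matrix.sub_apply, Matrix.smul_apply, smul_eq_mul]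
      field_simp
    rw [this, abs_div, abs_of_pos hpos, div_le_iff₀ hpos]
    nlinarith
  intro i j
  apply key
  rw [adjugate_fin_three, hdet, s00, s11, s22, s10, s20, s21, ← ha, ← hb, ← hc, abs_le]
  fin_cases i <;> fin_cases j <;> simp <;> constructor <;> linarith

lemma inv_mulVec_dotProduct (B : Matrix (Fin 3) (Fin 3) ℝ) (y : Fin 3 → ℝ) :
    B⁻¹ *ᵥ y ⬝ᵥ B⁻¹ *ᵥ y - y ⬝ᵥ y = y ⬝ᵥ ((B * Bᵀ)⁻¹ - 1) *ᵥ y := by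
  rw [sub_mulVec, one_mulVec, dotProduct_sub, Matrix.mul_inv_rev, ← mulVec_mulVec,
    ← Matrix.transpose_nonsing_inv, dotProduct_mulVec y, Matrix.vecMul_transpose]

/-! ### The covariance bound -/

lemma integral_centered_mul {Ω : Type*} [MeasurableSpace Ω] (μ : Measure Ω)
    [IsProbabilityMeasure μ] (X Y : Ω → ℝ) (hX : Integrable X μ) (hY : Integrable Y μ)
    (hXY : Integrable (fun ω => X ω * Y ω) μ) :
    ∫ ω, (X ω - ∫ η, X η ∂μ) * (Y ω - ∫ η, Y η ∂μ) ∂μ =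
      (∫ ω, X ω * Y ω ∂μ) - (∫ ω, X ω ∂μ) * ∫ ω, Y ω ∂μ := by
  set s := ∫ η, X η ∂μ with hs
  set t := ∫ η, Y η ∂μ with ht
  have h1 : Integrable (fun ω => X ω * Y ω - s * Y ω) μ := hXY.sub (hY.const_mul s)
  have h2 : Integrable (fun ω => X ω * t - s * t) μ := (hX.mul_const t).sub (integrable_const _)
  have : ∀ ω, (X ω - s) * (Y ω - t) = (X ω * Y ω - s * Y ω) - (X ω * t - s * t) := by
    intro ω; ring
  simp_rw [this]
  rw [integral_sub h1 h2, integral_sub hXY (hY.const_mul s),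
    integral_sub (hX.mul_const t) (integrable_const _), integral_const_mul, integral_mul_const,
    ← hs, ← ht]
  simp

/-- The final algebra: the first-order terms `-n a k²` of `J1 * D` and of `J3 * J4` cancel. -/
lemma quotient_bound {δ a k c1 c2 c3 c4 D n J1 J3 J4 : ℝ} (hδ : 0 < δ) (hδ' : δ ≤ 1 / 10)
    (ha0 : 0 ≤ a) (hc1' : 0 ≤ c1) (hc2' : 0 ≤ c2) (hc3' : 0 ≤ c3) (hc4' : 0 ≤ c4)
    (hDpos : 0 < D) (hdet : 1 / 2 ≤ D ^ 2) (hn : |n| ≤ 3 * δ)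
    (e1 : |J1 + n * a * k ^ 2| ≤ c1 * δ ^ 2) (e2 : |D - 1| ≤ c2 * δ)
    (e3 : |J3 - a| ≤ c3 * δ) (e4 : |J4 + n * k ^ 2| ≤ c4 * δ ^ 2) :
    |D⁻¹ * J1 - D⁻¹ * J3 * (D⁻¹ * J4)| ≤
      2 * (3 * a * k ^ 2 * c2 + c1 + c1 * c2 + a * c4 + 3 * c3 * k ^ 2 + c3 * c4) * δ ^ 2 := by
  obtain ⟨r1, hr1⟩ : ∃ r, r = J1 + n * a * k ^ 2 := ⟨_, rfl⟩
  obtain ⟨r2, hr2⟩ : ∃ r, r = D - 1 := ⟨_, rfl⟩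
  obtain ⟨r3, hr3⟩ : ∃ r, r = J3 - a := ⟨_, rfl⟩
  obtain ⟨r4, hr4⟩ : ∃ r, r = J4 + n * k ^ 2 := ⟨_, rfl⟩
  rw [← hr1] at e1
  rw [← hr2] at e2
  rw [← hr3] at e3
  rw [← hr4] at e4
  have hnum : J1 * D - J3 * J4 =
      -(n * a * k ^ 2 * r2) + r1 + r1 * r2 - a * r4 + r3 * n * k ^ 2 - r3 * r4 := by
    rw [show J1 = r1 - n * a * k ^ 2 by linarith, show D = 1 + r2 by linarith,
      show J3 = a + r3 by linarith, show J4 = r4 - n * k ^ 2 by linarith]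
    ring
  have hnumb : |J1 * D - J3 * J4| ≤
      (3 * a * k ^ 2 * c2 + c1 + c1 * c2 + a * c4 + 3 * c3 * k ^ 2 + c3 * c4) * δ ^ 2 := by
    have hk2 : 0 ≤ k ^ 2 := sq_nonneg k
    have b1 : |n * a * k ^ 2 * r2| ≤ (3 * δ) * a * k ^ 2 * (c2 * δ) := by
      rw [abs_mul, abs_mul, abs_mul, abs_of_nonneg ha0, abs_of_nonneg hk2]
      gcongr
    have hδ1 : δ ≤ 1 := by linarith
    have b2 : |r1 * r2| ≤ (c1 * δ ^ 2) * (c2 * 1) := by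
      rw [abs_mul]
      exact mul_le_mul e1 (e2.trans (by gcongr)) (abs_nonneg _) (by positivity)
    have b3 : |a * r4| ≤ a * (c4 * δ ^ 2) := by
      rw [abs_mul, abs_of_nonneg ha0]; gcongr
    have b4 : |r3 * n * k ^ 2| ≤ (c3 * δ) * (3 * δ) * k ^ 2 := by
      rw [abs_mul, abs_mul, abs_of_nonneg hk2]; gcongr
    have b5 : |r3 * r4| ≤ (c3 * 1) * (c4 * δ ^ 2) := by
      rw [abs_mul]
      exact mul_le_mul (e3.trans (by gcongr)) e4 (abs_nonneg _) (by positivity)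
    rw [hnum, abs_le]
    rw [abs_le] at b1 b2 b3 b4 b5 e1
    constructor <;> linarith [b1.1, b1.2, b2.1, b2.2, b3.1, b3.2, b4.1, b4.2, b5.1, b5.2, e1.1, e1.2]
  rw [show D⁻¹ * J1 - D⁻¹ * J3 * (D⁻¹ * J4) = (J1 * D - J3 * J4) / D ^ 2 by
    field_simp, abs_div, abs_of_pos (pow_pos hDpos 2), div_le_iff₀ (pow_pos hDpos 2)]
  refine hnumb.trans ?_
  have hK : 0 ≤ (3 * a * k ^ 2 * c2 + c1 + c1 * c2 + a * c4 + 3 * c3 * k ^ 2 + c3 * c4) * δ ^ 2 := by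
    positivity
  nlinarith

/-- The bound after rescaling to `σ_Z = 1` and absorbing the shift `b` into `F`. -/
lemma core_bound (F : ℝ → ℝ) (hFm : Measurable F)
    (hFi : Integrable (fun x => F x * gaussEnv x) (gaussianReal 0 1))
    (hF2i : Integrable (fun x => F x ^ 2 * gaussEnv x) (gaussianReal 0 1))
    (h1i : Integrable (fun x => 1 * gaussEnv x) (gaussianReal 0 1))
    (hF0 : ∫ x, F x ∂(gaussianReal 0 1) = 0) :
    ∃ C : ℝ, ∀ δ : ℝ, 0 < δ → δ ≤ 1 / 10 → ∀ B : Matrix (Fin 3) (Fin 3) ℝ,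
      (∀ i, |(B * Bᵀ) i i - 1| ≤ δ) → (∀ i j, i ≠ j → |(B * Bᵀ) i j| ≤ δ) →
      |∫ x, (F (B.mulVec x 0) ^ 2 - ∫ y, F (B.mulVec y 0) ^ 2 ∂(stdGaussPi 3))
          * (F (B.mulVec x 1) * F (B.mulVec x 2)
            - ∫ y, F (B.mulVec y 1) * F (B.mulVec y 2) ∂(stdGaussPi 3)) ∂(stdGaussPi 3)|
        ≤ C * δ ^ 2 := by
  have : IsProbabilityMeasure (stdGaussPi 3) := by unfold stdGaussPi; infer_instance
  set one : ℝ → ℝ := fun _ => 1 with hone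
  set sq : ℝ → ℝ := fun x => F x ^ 2 with hsq
  have hom : Measurable one := measurable_const
  have hsm : Measurable sq := hFm.pow_const 2
  let N : (Fin 3 → ℝ → ℝ) → ℝ := fun h => ∏ i, ∫ x, |h i x * gaussEnv x| ∂(gaussianReal 0 1)
  have hN : ∀ h, 0 ≤ N h := fun h =>
    Finset.prod_nonneg fun i _ => integral_nonneg fun x => abs_nonneg _
  set a := ∫ x, sq x ∂(gaussianReal 0 1) with ha
  have ha0 : 0 ≤ a := integral_nonneg fun x => sq_nonneg _
  set k := ∫ x, F x * x ∂(gaussianReal 0 1) with hk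
  set c1 := 100000 * N ![sq, F, F] with hc1
  set c2 := 1000 * N ![one, one, one] with hc2
  set c3 := 1000 * N ![sq, one, one] with hc3
  set c4 := 100000 * N ![one, F, F] with hc4
  have hc1' : 0 ≤ c1 := mul_nonneg (by norm_num) (hN _)
  have hc2' : 0 ≤ c2 := mul_nonneg (by norm_num) (hN _)
  have hc3' : 0 ≤ c3 := mul_nonneg (by norm_num) (hN _)
  have hc4' : 0 ≤ c4 := mul_nonneg (by norm_num) (hN _)
  refine ⟨2 * (3 * a * k ^ 2 * c2 + c1 + c1 * c2 + a * c4 + 3 * c3 * k ^ 2 + c3 * c4), ?_⟩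
  intro δ hδ hδ' B hd ho
  have hsym : ∀ i j, (B * Bᵀ) i j = (B * Bᵀ) j i := fun i j => by
    simp only [Matrix.mul_apply, Matrix.transpose_apply, mul_comm]
  obtain ⟨hdet, hMb⟩ := inv_sub_one_bound hδ hδ' hsym hd ho
  set M := (B * Bᵀ)⁻¹ - 1 with hM
  have hMsym : M 2 1 = M 1 2 := by
    have h1 : (B * Bᵀ)ᵀ = B * Bᵀ := by rw [Matrix.transpose_mul, Matrix.transpose_transpose]
    have h2 : Mᵀ = M := by
      rw [hM, Matrix.transpose_sub, Matrix.transpose_nonsing_inv, h1, Matrix.transpose_one]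
    exact congrFun (congrFun h2 1) 2
  have hdetB : (B * Bᵀ).det = |B.det| ^ 2 := by
    rw [det_mul, det_transpose, sq_abs, pow_two]
  set D := |B.det| with hD
  rw [hdetB] at hdet
  have hDpos : 0 < D := by
    rcases (abs_nonneg B.det).eq_or_lt with h | h
    · rw [hD, ← h] at hdet; norm_num at hdet
    · exact h
  have hB0 : B.det ≠ 0 := abs_pos.1 hDpos
  have hw : ∀ y : Fin 3 → ℝ, -(B⁻¹ *ᵥ y ⬝ᵥ B⁻¹ *ᵥ y - y ⬝ᵥ y) / 2 = -(y ⬝ᵥ M *ᵥ y) / 2 := by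
    intro y; rw [inv_mulVec_dotProduct]
  let J : (Fin 3 → ℝ → ℝ) → ℝ := fun h =>
    ∫ x, (∏ i, h i (x i)) * Real.exp (-(x ⬝ᵥ M *ᵥ x) / 2) ∂(stdGaussPi 3)
  have change : ∀ h : Fin 3 → ℝ → ℝ, (∀ i, Measurable (h i)) →
      (∀ i, Integrable (fun x => h i x * gaussEnv x) (gaussianReal 0 1)) →
      Integrable (fun x => ∏ i, h i (B.mulVec x i)) (stdGaussPi 3) ∧
      ∫ x, ∏ i, h i (B.mulVec x i) ∂(stdGaussPi 3) = D⁻¹ * J h := by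
    intro h hm hi
    have := stdGaussPi_integral_mulVec B hB0 (fun y => ∏ i, h i (y i))
      (Finset.measurable_fun_prod _ fun i _ => (hm i).comp (measurable_pi_apply i))
    simp only [hw] at this
    exact this (tilt_expansion h hm hi hδ hδ' M hMb).1
  have m1 : ∀ i, Measurable (![sq, F, F] i) := by intro i; fin_cases i <;> assumption
  have m2 : ∀ i, Measurable (![one, one, one] i) := by intro i; fin_cases i <;> assumption
  have m3 : ∀ i, Measurable (![sq, one, one] i) := by intro i; fin_cases i <;> assumption
  have m4 : ∀ i, Measurable (![one, F, F] i) := by intro i; fin_cases i <;> assumption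
  have i1 : ∀ i, Integrable (fun x => ![sq, F, F] i x * gaussEnv x) (gaussianReal 0 1) := by
    intro i; fin_cases i <;> assumption
  have i2 : ∀ i, Integrable (fun x => ![one, one, one] i x * gaussEnv x)
      (gaussianReal 0 1) := by
    intro i; fin_cases i <;> assumption
  have i3 : ∀ i, Integrable (fun x => ![sq, one, one] i x * gaussEnv x)
      (gaussianReal 0 1) := by
    intro i; fin_cases i <;> assumption
  have i4 : ∀ i, Integrable (fun x => ![one, F, F] i x * gaussEnv x) (gaussianReal 0 1) := by
    intro i; fin_cases i <;> assumption
  have hone1 : ∫ x, one x ∂(gaussianReal 0 1) = 1 := by simp [hone]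
  -- First- and second-order estimates of the four tilted integrals.
  have e1 : |J ![sq, F, F] + M 1 2 * a * k ^ 2| ≤ c1 * δ ^ 2 := by
    have h := (tilt_expansion _ m1 i1 hδ hδ' M hMb).2.2
    rw [integral_linear_term sq F hsm hFm hF2i hFi hF0 M hMsym] at h
    rw [show (∏ i, ∫ x, ![sq, F, F] i x ∂(gaussianReal 0 1)) = 0 by
      simp [Fin.prod_univ_three, hF0], sub_zero, sub_neg_eq_add] at h
    exact h
  have e2 : |J ![one, one, one] - 1| ≤ c2 * δ := by
    have h := (tilt_expansion _ m2 i2 hδ hδ' M hMb).2.1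
    rw [show (∏ i, ∫ x, ![one, one, one] i x ∂(gaussianReal 0 1)) = 1 by
      simp [Fin.prod_univ_three, hone1]] at h
    exact h
  have e3 : |J ![sq, one, one] - a| ≤ c3 * δ := by
    have h := (tilt_expansion _ m3 i3 hδ hδ' M hMb).2.1
    rw [show (∏ i, ∫ x, ![sq, one, one] i x ∂(gaussianReal 0 1)) = a by
      simp [Fin.prod_univ_three, hone1, ha]] at h
    exact h
  have e4 : |J ![one, F, F] + M 1 2 * k ^ 2| ≤ c4 * δ ^ 2 := by
    have h := (tilt_expansion _ m4 i4 hδ hδ' M hMb).2.2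
    rw [integral_linear_term one F hom hFm h1i hFi hF0 M hMsym, hone1] at h
    rw [show (∏ i, ∫ x, ![one, F, F] i x ∂(gaussianReal 0 1)) = 0 by
      simp [Fin.prod_univ_three, hF0], sub_zero, sub_neg_eq_add, mul_one] at h
    exact h
  obtain ⟨u1, v1⟩ := change _ m1 i1
  obtain ⟨u2, v2⟩ := change _ m2 i2
  obtain ⟨u3, v3⟩ := change _ m3 i3
  obtain ⟨u4, v4⟩ := change _ m4 i4
  simp only [Fin.prod_univ_three, Matrix.cons_val, hone, hsq, mul_one, one_mul,
    mul_assoc] at u1 v1 u3 v3 u4 v4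
  -- The total mass of the law of `B x` is one, so the normalisation is `J(1,1,1) = |det B|`.
  have hJD : J ![one, one, one] = D := by
    rw [show (fun x : Fin 3 → ℝ => ∏ i, ![one, one, one] i (B.mulVec x i)) = fun _ => 1 by
      funext x; simp [Fin.prod_univ_three, hone]] at v2
    rw [integral_const, probReal_univ, one_smul] at v2
    field_simp at v2
    exact v2.symm
  rw [integral_centered_mul _ _ _ u3 u4 u1, v1, v3, v4]
  change |D⁻¹ * J ![sq, F, F] - D⁻¹ * J ![sq, one, one] * (D⁻¹ * J ![one, F, F])| ≤ _
  rw [hJD] at e2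
  exact quotient_bound hδ hδ' ha0 hc1' hc2' hc3' hc4' hDpos hdet (hMb 1 2) e1 e2 e3 e4

/-- covariance bound for a squared feature entry against a product of
entries in two other distinct columns.  For any centered jointly Gaussian triple
`(N₁, N₂, N₃)` (realized as `N_i = (A x)_i` for standard Gaussian `x`) with
`Var(N_i) = σ_Z²(1+ε_i)`, `Cov(N_i,N_j) = σ_Z² ρ_{ij}` for `i ≠ j`, all
`|ε_i|, |ρ_{ij}| ≤ δ ≤ 1/10`, and `f` with finite Gaussian moments up to order 4
and `E[f(σ_Z N + b)] = 0`, `|E[(f(N₁+b)² − t₁₁)(f(N₂+b) f(N₃+b) − t₂₃)]| ≤ C δ²`. -/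
theorem covariance_bound_square_vs_pair
    (σZ : ℝ) (hσZ : 0 < σZ) (b : ℝ) (f : ℝ → ℝ) (hf : Measurable f)
    (hmom : ∀ σ : ℝ, 0 < σ → ∀ k : ℕ, 1 ≤ k → k ≤ 4 →
      Integrable (fun x => |f (σ * x + b)| ^ k) (gaussianReal 0 1))
    (hcen : ∫ x, f (σZ * x + b) ∂(gaussianReal 0 1) = 0) :
    ∃ C : ℝ, ∀ δ : ℝ, 0 < δ → δ ≤ 1 / 10 →
      ∀ (ε : Fin 3 → ℝ) (ρ : Fin 3 → Fin 3 → ℝ),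
        (∀ i, |ε i| ≤ δ) → (∀ i j, i ≠ j → |ρ i j| ≤ δ) →
      ∀ A : Matrix (Fin 3) (Fin 3) ℝ,
        (∀ i, (A * Aᵀ) i i = σZ ^ 2 * (1 + ε i)) →
        (∀ i j, i ≠ j → (A * Aᵀ) i j = σZ ^ 2 * ρ i j) →
        |∫ x, ((f (A.mulVec x 0 + b)) ^ 2
                - ∫ y, (f (A.mulVec y 0 + b)) ^ 2 ∂(stdGaussPi 3))
             * (f (A.mulVec x 1 + b) * f (A.mulVec x 2 + b)
                - ∫ y, f (A.mulVec y 1 + b) * f (A.mulVec y 2 + b) ∂(stdGaussPi 3))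
           ∂(stdGaussPi 3)|
          ≤ C * δ ^ 2 := by
  have hFm : Measurable fun y => f (σZ * y + b) := by fun_prop
  have h10 : 0 < σZ * 10 := by positivity
  obtain ⟨C, hC⟩ := core_bound (fun y => f (σZ * y + b)) hFm
    (integrable_mul_gaussEnv (h := fun y => f (σZ * y + b)) (by
      have h := hmom _ h10 1 le_rfl (by norm_num)
      simp only [pow_one, mul_assoc] at h
      exact (integrable_norm_iff (Measurable.aestronglyMeasurable (by fun_prop))).1 h))
    (integrable_mul_gaussEnv (h := fun y => f (σZ * y + b) ^ 2) (by
      have h := hmom _ h10 2 (by norm_num) (by norm_num)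
      simpa only [sq_abs, mul_assoc] using h))
    (integrable_mul_gaussEnv (h := fun _ => 1) (integrable_const _)) hcen
  refine ⟨C, fun δ hδ hδ' ε ρ hε hρ A hA1 hA2 => ?_⟩
  obtain ⟨B, rfl⟩ : ∃ B : Matrix (Fin 3) (Fin 3) ℝ, A = σZ • B :=
    ⟨σZ⁻¹ • A, by rw [smul_smul, mul_inv_cancel₀ hσZ.ne', one_smul]⟩
  have hBB : ∀ i j, ((σZ • B) * (σZ • B)ᵀ) i j = σZ ^ 2 * (B * Bᵀ) i j := by
    intro i j
    simp [Matrix.transpose_smul, sq, mul_assoc]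
  have hs2 : σZ ^ 2 ≠ 0 := by positivity
  have h := hC δ hδ hδ' B (fun i => ?_) (fun i j hij => ?_)
  · simpa only [smul_mulVec, Pi.smul_apply, smul_eq_mul] using h
  · have := hA1 i
    rw [hBB] at this
    rw [mul_left_cancel₀ hs2 this, add_sub_cancel_left]
    exact hε i
  · have := hA2 i j hij
    rw [hBB] at this
    rw [mul_left_cancel₀ hs2 this]
    exact hρ i j hij
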